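/- Let V be the maximum of m jointly Gaussian centered random variables each with variance at most σ̄², where σ̄ > 0 and each variance is at least c > 0. Then there is a constant C depending only on c and σ̄ such that for every ε > 0 and every s ∈ ℝ, P(|V − s| ≤ ε) ≤ C·ε·(1 + (log(m/ε))^{1/2}). -/

import Mathlib

open MeasureTheory ProbabilityTheory Matrix

/-- A random vector is centered Gaussian with covariance matrix `S` if every linear
combination of its coordinates is one-dimensional Gaussian with mean `0` and the
corresponding quadratic-form variance. -/
def IsCenteredGaussianVec {Ω : Type*} [MeasurableSpace Ω] (μ : Measure Ω)
    {ι : Type*} [Fintype ι] (X : Ω → ι → ℝ) (S : Matrix ι ι ℝ) : Prop :=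
  ∀ c : ι → ℝ,
    Measure.map (fun ω => ∑ i, c i * X ω i) μ =
      gaussianReal 0 (∑ i, ∑ j, c i * S i j * c j).toNNReal

/-- A Gaussian hazard-rate bound: the part of an upper set lying in an interval has mass at most
proportional to the length of the interval and to the mass of the upper set. -/
theorem gaussianReal_inter_Icc_le_of_isUpperSet {m a b B : ℝ} (hab : a ≤ b) (hB : |b - m| ≤ B)
    {U : Set ℝ} (hU : IsUpperSet U) :
    gaussianReal m 1 (U ∩ Set.Icc a b) ≤
      ENNReal.ofReal (Real.exp 2 * (1 + B) * (b - a)) * gaussianReal m 1 U := by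
  have hB0 : 0 ≤ B := (abs_nonneg _).trans hB
  have he : 1 ≤ Real.exp 2 := Real.one_le_exp (by norm_num)
  rcases (U ∩ Set.Icc a b).eq_empty_or_nonempty with h0 | ⟨x₀, hx₀U, hx₀⟩
  · simp [h0]
  by_cases hlarge : 1 ≤ (1 + B) * (b - a)
  · refine (measure_mono Set.inter_subset_left).trans (le_mul_of_one_le_left' ?_)
    rw [ENNReal.one_le_ofReal, mul_assoc]
    nlinarith
  set d : ℝ := 1 / (1 + B) with hd
  have hd0 : 0 < d := by positivity
  have hdB : d * (1 + B) = 1 := by rw [hd]; field_simp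
  have hbad : b - a ≤ d := by
    rw [hd, le_div_iff₀ (by positivity)]; linarith
  have hbU : Set.Icc b (b + d) ⊆ U := fun y hy => hU (hx₀.2.trans hy.1) hx₀U
  have hpdf : ∀ x ∈ Set.Icc a b, ∀ y ∈ Set.Icc b (b + d),
      gaussianPDF m 1 x ≤ ENNReal.ofReal (Real.exp 2) * gaussianPDF m 1 y := by
    intro x hx y hy
    rw [gaussianPDF, gaussianPDF, ← ENNReal.ofReal_mul (Real.exp_pos 2).le]
    refine ENNReal.ofReal_le_ofReal ?_
    rw [gaussianPDFReal_def, mul_left_comm, ← Real.exp_add]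
    have hbm := (abs_le.1 hB).2
    have h1 : (y - x) * ((y - m) + (x - m)) ≤ 2 * d * (2 * (1 + B)) := by
      have hyx : 0 ≤ y - x := by linarith [hx.2, hy.1]
      have hd1 : d ≤ 1 := by nlinarith
      calc (y - x) * ((y - m) + (x - m)) ≤ (y - x) * (2 * (1 + B)) :=
            mul_le_mul_of_nonneg_left (by linarith [hx.2, hy.2]) hyx
        _ ≤ _ := mul_le_mul_of_nonneg_right (by linarith [hx.1, hy.2]) (by positivity)
    refine mul_le_mul_of_nonneg_left (Real.exp_le_exp.2 ?_) (by positivity)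
    simp only [NNReal.coe_one]
    nlinarith
  have hstep : ∀ y ∈ Set.Icc b (b + d), gaussianReal m 1 (Set.Icc a b) ≤
      ENNReal.ofReal (Real.exp 2 * (b - a)) * gaussianPDF m 1 y := by
    intro y hy
    rw [gaussianReal_apply m one_ne_zero]
    calc ∫⁻ x in Set.Icc a b, gaussianPDF m 1 x
        ≤ ∫⁻ x in Set.Icc a b, ENNReal.ofReal (Real.exp 2) * gaussianPDF m 1 y :=
          setLIntegral_mono measurable_const fun x hx => hpdf x hx y hy
      _ = _ := by
          rw [setLIntegral_const, Real.volume_Icc, ENNReal.ofReal_mul (Real.exp_pos 2).le]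
          ring
  have hint : gaussianReal m 1 (Set.Icc a b) * ENNReal.ofReal d ≤
      ENNReal.ofReal (Real.exp 2 * (b - a)) * gaussianReal m 1 (Set.Icc b (b + d)) := by
    calc gaussianReal m 1 (Set.Icc a b) * ENNReal.ofReal d
        = ∫⁻ _ in Set.Icc b (b + d), gaussianReal m 1 (Set.Icc a b) := by
          rw [setLIntegral_const, Real.volume_Icc]; simp
      _ ≤ ∫⁻ y in Set.Icc b (b + d),
            ENNReal.ofReal (Real.exp 2 * (b - a)) * gaussianPDF m 1 y :=
          setLIntegral_mono ((measurable_gaussianPDF m 1).const_mul _) hstep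
      _ = _ := by
          rw [lintegral_const_mul _ (measurable_gaussianPDF m 1),
            gaussianReal_apply m one_ne_zero]
  calc gaussianReal m 1 (U ∩ Set.Icc a b) ≤ gaussianReal m 1 (Set.Icc a b) :=
        measure_mono Set.inter_subset_right
    _ = gaussianReal m 1 (Set.Icc a b) * ENNReal.ofReal d * ENNReal.ofReal (1 + B) := by
        rw [mul_assoc, ← ENNReal.ofReal_mul hd0.le, hdB, ENNReal.ofReal_one, mul_one]
    _ ≤ ENNReal.ofReal (Real.exp 2 * (b - a)) * gaussianReal m 1 U * ENNReal.ofReal (1 + B) := by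
        gcongr ?_ * _
        exact hint.trans (by gcongr)
    _ = _ := by
        rw [mul_right_comm, ← ENNReal.ofReal_mul (by nlinarith)]
        ring_nf

/-- Standardized Gaussian variables have correlations at most `1`. -/
theorem covariance_le_one_of_variance_eq_one {Ω : Type*} [MeasurableSpace Ω] {P : Measure Ω}
    [IsFiniteMeasure P] {X Y : Ω → ℝ} (hX : MemLp X 2 P) (hY : MemLp Y 2 P)
    (hVX : Var[X; P] = 1) (hVY : Var[Y; P] = 1) : cov[X, Y; P] ≤ 1 := by
  have h := variance_nonneg (X - Y) P
  rw [variance_sub hX hY, hVX, hVY] at h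
  linarith

/-- The event that `X j` is the (first-attained) maximum becomes more likely as `X j` increases, so
the hazard-rate bound applies conditionally on the part of `X` independent of `X j`. -/
theorem measure_argmax_inter_abs_le {Ω ι : Type*} [MeasurableSpace Ω] [Fintype ι] [LinearOrder ι]
    {P : Measure Ω} [IsProbabilityMeasure P] {X : ι → Ω → ℝ}
    (hX : HasGaussianLaw (fun ω i ↦ X i ω) P) (hXm : ∀ i, Measurable (X i))
    (hV : ∀ i, Var[X i; P] = 1) {η B : ℝ} (hη : 0 ≤ η) (hB : ∀ i, |P[X i]| + η ≤ B) (j : ι) :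
    P ({ω | ∀ i, X i ω ≤ X j ω ∧ (i < j → X i ω < X j ω)} ∩ {ω | |X j ω| ≤ η}) ≤
      ENNReal.ofReal (Real.exp 2 * (1 + B) * (2 * η)) *
        P {ω | ∀ i, X i ω ≤ X j ω ∧ (i < j → X i ω < X j ω)} := by
  have hLp : ∀ i, MemLp (X i) 2 P := fun i => (hX.eval i).memLp_two
  set ρ : ι → ℝ := fun i => cov[X j, X i; P] with hρ
  have hρ1 : ∀ i, ρ i ≤ 1 := fun i =>
    covariance_le_one_of_variance_eq_one (hLp j) (hLp i) (hV j) (hV i)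
  set Z : ι → Ω → ℝ := fun i ω => X i ω - ρ i * X j ω with hZ
  have hZm : ∀ i, Measurable (Z i) := fun i => (hXm i).sub ((hXm j).const_mul _)
  have hZm' : Measurable (fun ω i ↦ Z i ω) := measurable_pi_lambda _ hZm
  let L : (ι → ℝ) →L[ℝ] (Unit → ℝ) × (ι → ℝ) :=
    (ContinuousLinearMap.pi fun _ => ContinuousLinearMap.proj j).prod
      (ContinuousLinearMap.pi fun i =>
        ContinuousLinearMap.proj i - ρ i • ContinuousLinearMap.proj j)
  have hL : HasGaussianLaw (fun ω ↦ ((fun _ : Unit ↦ X j ω), fun i ↦ Z i ω)) P :=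
    hX.map_fun L
  have hind' : IndepFun (fun ω (_ : Unit) ↦ X j ω) (fun ω i ↦ Z i ω) P := by
    refine HasGaussianLaw.indepFun_of_covariance_eval (X := fun _ : Unit => X j) hL fun _ i => ?_
    rw [hZ, covariance_fun_sub_right (hLp j) (hLp i) ((hLp j).const_mul _),
      covariance_const_mul_right, covariance_self (hXm j).aemeasurable, hV j, hρ]
    ring
  have hind : IndepFun (X j) (fun ω i ↦ Z i ω) P :=
    hind'.comp (φ := fun f : Unit → ℝ => f ()) (ψ := id) (measurable_pi_apply _) measurable_id
  have hmap := hind.map_prod_eq_prod_map_map (hXm j).aemeasurable hZm'.aemeasurable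
  have hlaw : P.map (X j) = gaussianReal P[X j] 1 := by
    rw [(hX.eval j).map_eq_gaussianReal, hV j, Real.toNNReal_one]
  set T : Set (ℝ × (ι → ℝ)) :=
    {p | ∀ i, p.2 i + ρ i * p.1 ≤ p.1 ∧ (i < j → p.2 i + ρ i * p.1 < p.1)} with hT
  have hTm : MeasurableSet T := by
    rw [hT]
    simp only [Set.ofPred_forall, Set.ofPred_and]
    refine MeasurableSet.iInter fun i => (measurableSet_le (by fun_prop) (by fun_prop)).inter ?_
    exact MeasurableSet.iInter fun _ => measurableSet_lt (by fun_prop) (by fun_prop)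
  have hTup : ∀ z, IsUpperSet ((fun x => (x, z)) ⁻¹' T) := by
    intro z x y hxy hx i
    have := mul_le_mul_of_nonneg_left hxy (sub_nonneg.2 (hρ1 i))
    obtain ⟨h1, h2⟩ := hx i
    dsimp only at h1 h2 ⊢
    exact ⟨by linarith, fun hij => by linarith [h2 hij]⟩
  have hpair : Measurable (fun ω => (X j ω, fun i => Z i ω)) := (hXm j).prodMk hZm'
  have hE : {ω | ∀ i, X i ω ≤ X j ω ∧ (i < j → X i ω < X j ω)} =
      (fun ω => (X j ω, fun i => Z i ω)) ⁻¹' T := by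
    ext ω
    simp [hT, hZ]
  have hI : MeasurableSet (Set.Icc (-η) η ×ˢ (Set.univ : Set (ι → ℝ))) :=
    measurableSet_Icc.prod MeasurableSet.univ
  have hEI : {ω | ∀ i, X i ω ≤ X j ω ∧ (i < j → X i ω < X j ω)} ∩ {ω | |X j ω| ≤ η} =
      (fun ω => (X j ω, fun i => Z i ω)) ⁻¹' (T ∩ Set.Icc (-η) η ×ˢ Set.univ) := by
    rw [hE, Set.preimage_inter]
    congr 1
    ext ω
    simp [abs_le]
  rw [hEI, hE, ← Measure.map_apply hpair (hTm.inter hI), ← Measure.map_apply hpair hTm, hmap,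
    hlaw, Measure.prod_apply_symm (hTm.inter hI), Measure.prod_apply_symm hTm,
    ← lintegral_const_mul _ (measurable_measure_prodMk_right hTm)]
  refine lintegral_mono fun z => ?_
  have key := gaussianReal_inter_Icc_le_of_isUpperSet (m := P[X j]) (a := -η) (b := η) (B := B)
    (by linarith) ?_ (hTup z)
  · rw [show η - -η = 2 * η by ring] at key
    refine le_trans (measure_mono ?_) key
    rintro x ⟨h1, h2⟩
    exact ⟨h1, h2.1⟩
  · refine (abs_sub _ _).trans ?_
    rw [abs_of_nonneg hη]
    linarith [hB j]

/-- Anti-concentration at `0` for the maximum of Gaussian variables with unit variances. -/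
theorem measure_exists_argmax_abs_le {Ω ι : Type*} [MeasurableSpace Ω] [Fintype ι] [LinearOrder ι]
    {P : Measure Ω} [IsProbabilityMeasure P] {X : ι → Ω → ℝ}
    (hX : HasGaussianLaw (fun ω i ↦ X i ω) P) (hXm : ∀ i, Measurable (X i))
    (hV : ∀ i, Var[X i; P] = 1) {η B : ℝ} (hη : 0 ≤ η) (hB : ∀ i, |P[X i]| + η ≤ B) :
    P {ω | ∃ j, (∀ i, X i ω ≤ X j ω) ∧ |X j ω| ≤ η} ≤
      ENNReal.ofReal (Real.exp 2 * (1 + B) * (2 * η)) := by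
  set E : ι → Set Ω := fun j => {ω | ∀ i, X i ω ≤ X j ω ∧ (i < j → X i ω < X j ω)} with hE
  have hEm : ∀ j, MeasurableSet (E j) := by
    intro j
    simp only [hE, Set.ofPred_forall, Set.ofPred_and]
    refine MeasurableSet.iInter fun i => (measurableSet_le (hXm i) (hXm j)).inter ?_
    exact MeasurableSet.iInter fun _ => measurableSet_lt (hXm i) (hXm j)
  have hdisj : Pairwise (Function.onFun Disjoint E) := by
    intro i j hij
    refine Set.disjoint_left.2 fun ω hi hj => ?_
    rcases lt_or_gt_of_ne hij with h | h
    · exact absurd ((hj i).2 h) (not_lt.2 (hi j).1)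
    · exact absurd ((hi j).2 h) (not_lt.2 (hj i).1)
  have hsub : {ω | ∃ j, (∀ i, X i ω ≤ X j ω) ∧ |X j ω| ≤ η} ⊆
      ⋃ j ∈ (Finset.univ : Finset ι), E j ∩ {ω | |X j ω| ≤ η} := by
    rintro ω ⟨j, hj, hjη⟩
    obtain ⟨k, hk, hkmin⟩ := (Finset.univ.filter fun k => ∀ i, X i ω ≤ X k ω).exists_min_image id
      ⟨j, by simpa using hj⟩
    simp only [Finset.mem_filter, Finset.mem_univ, true_and, id] at hk hkmin
    have hkj : X k ω = X j ω := le_antisymm (hj k) (hk j)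
    simp only [Finset.mem_univ, Set.iUnion_true, Set.mem_iUnion]
    refine ⟨k, fun i => ⟨hk i, fun hik => ?_⟩, by simpa [hkj] using hjη⟩
    by_contra hlt
    exact absurd (hkmin i fun l => (hk l).trans (not_lt.1 hlt)) (not_le.2 hik)
  calc P {ω | ∃ j, (∀ i, X i ω ≤ X j ω) ∧ |X j ω| ≤ η}
      ≤ ∑ j, P (E j ∩ {ω | |X j ω| ≤ η}) :=
        (measure_mono hsub).trans (measure_biUnion_finset_le _ _)
    _ ≤ ∑ j, ENNReal.ofReal (Real.exp 2 * (1 + B) * (2 * η)) * P (E j) :=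
        Finset.sum_le_sum fun j _ => measure_argmax_inter_abs_le hX hXm hV hη hB j
    _ = ENNReal.ofReal (Real.exp 2 * (1 + B) * (2 * η)) * P (⋃ j, E j) := by
        rw [measure_iUnion hdisj hEm, tsum_fintype, Finset.mul_sum]
    _ ≤ _ := mul_le_of_le_one_right' prob_le_one

/-- Upper Gaussian tail bound. -/
theorem measureReal_ge_le_exp_of_map_eq_gaussianReal {Ω : Type*} [MeasurableSpace Ω]
    {P : Measure Ω} {X : Ω → ℝ} (hXm : AEMeasurable X P) {v : NNReal}
    (hX : P.map X = gaussianReal 0 v) {σ t : ℝ} (hσ : (v : ℝ) ≤ σ ^ 2) (ht : 0 ≤ t) :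
    P.real {ω | t ≤ X ω} ≤ Real.exp (-t ^ 2 / (2 * σ ^ 2)) := by
  have hsub : HasSubgaussianMGF X (σ ^ 2).toNNReal P := by
    refine ⟨fun u => ?_, fun u => ?_⟩
    · have h := integrable_exp_mul_gaussianReal (μ := 0) (v := v) u
      rw [← hX] at h
      exact h.comp_aemeasurable hXm
    · rw [mgf_gaussianReal hX]
      refine Real.exp_le_exp.2 ?_
      have := mul_le_mul_of_nonneg_right hσ (sq_nonneg u)
      rw [Real.coe_toNNReal _ (sq_nonneg σ)]
      linarith
  simpa [Real.coe_toNNReal _ (sq_nonneg σ)] using hsub.measure_ge_le ht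

namespace IsCenteredGaussianVec

variable {Ω ι : Type*} [MeasurableSpace Ω] [Fintype ι] {μ : Measure Ω} {G : Ω → ι → ℝ}
  {S : Matrix ι ι ℝ}

theorem map_eval (h : IsCenteredGaussianVec μ G S) (i : ι) :
    μ.map (fun ω => G ω i) = gaussianReal 0 (S i i).toNNReal := by
  classical
  simpa [Pi.single_apply] using h (Pi.single i 1)

theorem hasGaussianLaw (h : IsCenteredGaussianVec μ G S) (hG : Measurable G) :
    HasGaussianLaw (fun ω i ↦ G ω i) μ := by
  classical
  refine ⟨isGaussian_of_map_eq_gaussianReal fun L => ⟨0,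
    (∑ i, ∑ j, L (Pi.single i 1) * S i j * L (Pi.single j 1)).toNNReal, ?_⟩⟩
  · rw [Measure.map_map L.continuous.measurable hG, ← h fun i => L (Pi.single i 1)]
    congr 1
    ext ω
    conv_lhs => rw [Function.comp_apply, pi_eq_sum_univ' (G ω), map_sum]
    refine Finset.sum_congr rfl fun i _ => ?_
    rw [map_smul, smul_eq_mul, mul_comm]

/-- Anti-concentration of the maximum, with a bound that is linear in the level `s`. -/
theorem measureReal_abs_iSup_sub_le [Nonempty ι] [LinearOrder ι] [IsProbabilityMeasure μ]
    (h : IsCenteredGaussianVec μ G S) (hG : Measurable G) {c : ℝ} (hc : 0 < c)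
    (hS : ∀ i, c ≤ S i i) {ε : ℝ} (hε : 0 ≤ ε) (s : ℝ) :
    μ.real {ω | |(⨆ i, G ω i) - s| ≤ ε} ≤
      Real.exp 2 * (1 + (|s| + ε) / √c) * (2 * (ε / √c)) := by
  have hGL := h.hasGaussianLaw hG
  have hGm : ∀ i, Measurable fun ω => G ω i := fun i => (measurable_pi_apply i).comp hG
  have hSpos : ∀ i, 0 < √(S i i) := fun i => Real.sqrt_pos.2 (hc.trans_le (hS i))
  have hcS : ∀ i, √c ≤ √(S i i) := fun i => Real.sqrt_le_sqrt (hS i)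
  have hc' : 0 < √c := Real.sqrt_pos.2 hc
  have hlaw : ∀ i, HasLaw (fun ω => (G ω i - s) / √(S i i))
      (gaussianReal (-s / √(S i i)) 1) μ := by
    intro i
    have h1 : HasLaw (fun ω => G ω i) (gaussianReal 0 (S i i).toNNReal) μ :=
      ⟨(hGm i).aemeasurable, h.map_eval i⟩
    convert gaussianReal_div_const (gaussianReal_sub_const h1 s) √(S i i) using 2
    · ring
    · ext
      have := hc.trans_le (hS i)
      simp [Real.sq_sqrt this.le, Real.coe_toNNReal _ this.le, this.ne']
  have hWm : ∀ i, Measurable fun ω => (G ω i - s) / √(S i i) :=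
    fun i => ((hGm i).sub_const s).div_const _
  have hW : HasGaussianLaw (fun ω i ↦ (G ω i - s) / √(S i i)) μ := by
    let L : (ι → ℝ) →L[ℝ] (ι → ℝ) :=
      ContinuousLinearMap.pi fun i => (√(S i i))⁻¹ • ContinuousLinearMap.proj i
    have hLG : IsGaussian (μ.map fun ω => L (G ω)) := (hGL.map_fun L).isGaussian_map
    refine ⟨?_⟩
    have heq : (fun ω i ↦ (G ω i - s) / √(S i i)) =
        (fun x : ι → ℝ => x - fun i => s / √(S i i)) ∘ fun ω => L (G ω) := by
      ext ω i
      simp [L]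
      ring
    have hLm : Measurable fun ω => L (G ω) := L.continuous.measurable.comp hG
    rw [heq, ← Measure.map_map (g := fun x : ι → ℝ => x - fun i => s / √(S i i))
      (measurable_id.sub_const _) hLm]
    infer_instance
  have hV : ∀ i, Var[fun ω => (G ω i - s) / √(S i i); μ] = 1 := fun i => by
    rw [(hlaw i).variance_eq, variance_id_gaussianReal, NNReal.coe_one]
  have hmean : ∀ i, |∫ ω, (G ω i - s) / √(S i i) ∂μ| + ε / √c ≤ (|s| + ε) / √c := fun i => by
    rw [(hlaw i).integral_eq, integral_id_gaussianReal, abs_div, abs_neg, abs_of_pos (hSpos i),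
      add_div]
    gcongr
    exact hS i
  have key := measure_exists_argmax_abs_le hW hWm hV (div_nonneg hε hc'.le) hmean
  refine ENNReal.toReal_le_of_le_ofReal (by positivity) (le_trans (measure_mono ?_) key)
  intro ω hω
  obtain ⟨hlo, hhi⟩ := abs_le.1 (show |(⨆ i, G ω i) - s| ≤ ε from hω)
  obtain ⟨j, hj⟩ := Finite.exists_max fun i => (G ω i - s) / √(S i i)
  refine ⟨j, hj, abs_le.2 ⟨?_, ?_⟩⟩
  · obtain ⟨k, hk⟩ := exists_eq_ciSup_of_finite (f := G ω)
    refine le_trans ?_ (hj k)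
    rw [← neg_div, div_le_div_iff₀ hc' (hSpos k)]
    nlinarith [hcS k]
  · have := le_ciSup (Set.finite_range (G ω)).bddAbove j
    exact div_le_div₀ hε (by linarith) hc' (hcS j)

/-- Upper tail of the maximum. -/
theorem measureReal_le_iSup_le [Nonempty ι] [IsProbabilityMeasure μ]
    (h : IsCenteredGaussianVec μ G S) (hG : Measurable G) {σ t : ℝ}
    (hS : ∀ i, S i i ≤ σ ^ 2) (ht : 0 ≤ t) :
    μ.real {ω | t ≤ ⨆ i, G ω i} ≤ Fintype.card ι * Real.exp (-t ^ 2 / (2 * σ ^ 2)) := by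
  have hGm : ∀ i, Measurable fun ω => G ω i := fun i => (measurable_pi_apply i).comp hG
  calc μ.real {ω | t ≤ ⨆ i, G ω i} ≤ μ.real (⋃ i, {ω | t ≤ G ω i}) := by
        refine measureReal_mono fun ω hω => ?_
        obtain ⟨k, hk⟩ := exists_eq_ciSup_of_finite (f := G ω)
        exact Set.mem_iUnion.2 ⟨k, hω.trans_eq hk.symm⟩
    _ ≤ ∑ i, μ.real {ω | t ≤ G ω i} := measureReal_iUnion_fintype_le _
    _ ≤ ∑ _i : ι, Real.exp (-t ^ 2 / (2 * σ ^ 2)) :=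
        Finset.sum_le_sum fun i _ => measureReal_ge_le_exp_of_map_eq_gaussianReal
          (hGm i).aemeasurable (h.map_eval i)
          (by rw [Real.coe_toNNReal']; exact max_le (hS i) (sq_nonneg σ)) ht
    _ = _ := by simp

/-- Lower tail of the maximum. -/
theorem measureReal_iSup_le_neg_le [Nonempty ι] [IsProbabilityMeasure μ]
    (h : IsCenteredGaussianVec μ G S) (hG : Measurable G) {σ t : ℝ}
    (hS : ∀ i, S i i ≤ σ ^ 2) (ht : 0 ≤ t) :
    μ.real {ω | (⨆ i, G ω i) ≤ -t} ≤ Real.exp (-t ^ 2 / (2 * σ ^ 2)) := by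
  obtain ⟨i⟩ := ‹Nonempty ι›
  have hGm : Measurable fun ω => G ω i := (measurable_pi_apply i).comp hG
  have hlaw : μ.map (fun ω => -G ω i) = gaussianReal 0 (S i i).toNNReal := by
    have hneg := gaussianReal_neg (X := fun ω => G ω i) ⟨hGm.aemeasurable, h.map_eval i⟩
    rw [neg_zero] at hneg
    exact hneg.map_eq
  refine le_trans (measureReal_mono fun ω hω => ?_)
    (measureReal_ge_le_exp_of_map_eq_gaussianReal hGm.neg.aemeasurable hlaw
      (by rw [Real.coe_toNNReal']; exact max_le (hS i) (sq_nonneg σ)) ht)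
  have h1 : (⨆ i, G ω i) ≤ -t := hω
  have h2 := le_ciSup (Set.finite_range (G ω)).bddAbove i
  exact le_neg.1 (h2.trans h1)

end IsCenteredGaussianVec

theorem stmt_12 (c σbar : ℝ) (hc : 0 < c) (hσbar : 0 < σbar) (hcσ : c ≤ σbar ^ 2) :
    ∃ C : ℝ, 0 < C ∧
      ∀ (Ω : Type) (_ : MeasurableSpace Ω) (μ : Measure Ω), IsProbabilityMeasure μ →
        ∀ (m : ℕ), 0 < m →
          ∀ (G : Ω → Fin m → ℝ), Measurable G →
            ∀ (S : Matrix (Fin m) (Fin m) ℝ), S.PosSemidef →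
              IsCenteredGaussianVec μ G S →
              (∀ ℓ, c ≤ S ℓ ℓ ∧ S ℓ ℓ ≤ σbar ^ 2) →
              ∀ (ε : ℝ), 0 < ε → ∀ s : ℝ,
                (μ {ω | |(⨆ ℓ, G ω ℓ) - s| ≤ ε}).toReal ≤
                  C * ε * (1 + Real.sqrt (Real.log ((m : ℝ) / ε))) := by
  have hc' : 0 < √c := Real.sqrt_pos.2 hc
  set A : ℝ := (2 + √2 * σbar) / √c with hA
  have hA0 : 0 < A := by positivity
  set D : ℝ := Real.exp 2 * (1 + A) * (2 / √c) with hD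
  have hD0 : 0 < D := by positivity
  refine ⟨D + 1, by positivity, ?_⟩
  intro Ω _ μ _ m hm G hG S _ hGS hS ε hε s
  change μ.real _ ≤ _
  have : Nonempty (Fin m) := ⟨⟨0, hm⟩⟩
  set q : ℝ := √(Real.log ((m : ℝ) / ε)) with hq
  have hq0 : 0 ≤ q := Real.sqrt_nonneg _
  have hm1 : (1 : ℝ) ≤ m := by exact_mod_cast hm
  have hεC : ε ≤ (D + 1) * ε * (1 + q) := by
    have : 1 ≤ (D + 1) * (1 + q) := by nlinarith
    nlinarith
  rcases le_or_gt 1 ε with hε1 | hε1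
  · exact measureReal_le_one.trans (hε1.trans hεC)
  have hmε : 1 ≤ (m : ℝ) / ε := by
    rw [le_div_iff₀ hε]
    linarith
  set t : ℝ := √2 * σbar * q with ht
  have ht0 : 0 ≤ t := by positivity
  have hexp : Real.exp (-t ^ 2 / (2 * σbar ^ 2)) = ε / m := by
    have h1 : -t ^ 2 / (2 * σbar ^ 2) = -Real.log ((m : ℝ) / ε) := by
      rw [ht, mul_pow, mul_pow, hq, Real.sq_sqrt (Real.log_nonneg hmε), Real.sq_sqrt (by norm_num)]
      field_simp
    rw [h1, Real.exp_neg, Real.exp_log (by positivity), inv_div]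
  rcases le_or_gt |s| (1 + t) with hs | hs
  · refine (hGS.measureReal_abs_iSup_sub_le hG hc (fun i => (hS i).1) hε.le s).trans ?_
    have hB : 1 + (|s| + ε) / √c ≤ (1 + A) * (1 + q) := by
      have h1 : (|s| + ε) / √c ≤ A * (1 + q) := by
        rw [hA, div_mul_eq_mul_div]
        gcongr
        have : 0 ≤ √2 * σbar := by positivity
        nlinarith
      linarith
    calc Real.exp 2 * (1 + (|s| + ε) / √c) * (2 * (ε / √c))
        ≤ Real.exp 2 * ((1 + A) * (1 + q)) * (2 * (ε / √c)) := by gcongr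
      _ = D * ε * (1 + q) := by rw [hD]; ring
      _ ≤ (D + 1) * ε * (1 + q) := by gcongr; linarith
  refine le_trans ?_ hεC
  rcases lt_abs.1 hs with hs | hs
  · calc μ.real {ω | |(⨆ ℓ, G ω ℓ) - s| ≤ ε} ≤ μ.real {ω | t ≤ ⨆ ℓ, G ω ℓ} := by
          refine measureReal_mono fun ω hω => ?_
          have := (abs_le.1 (show |(⨆ i, G ω i) - s| ≤ ε from hω)).1
          change t ≤ ⨆ ℓ, G ω ℓ
          linarith
      _ ≤ _ := hGS.measureReal_le_iSup_le hG (fun i => (hS i).2) ht0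
      _ = ε := by
          rw [hexp, Fintype.card_fin]
          field_simp
  · calc μ.real {ω | |(⨆ ℓ, G ω ℓ) - s| ≤ ε} ≤ μ.real {ω | (⨆ ℓ, G ω ℓ) ≤ -t} := by
          refine measureReal_mono fun ω hω => ?_
          have := (abs_le.1 (show |(⨆ i, G ω i) - s| ≤ ε from hω)).2
          change (⨆ ℓ, G ω ℓ) ≤ -t
          linarith
      _ ≤ _ := hGS.measureReal_iSup_le_neg_le hG (fun i => (hS i).2) ht0
      _ = ε / m := hexp
      _ ≤ ε := div_le_self hε.le hm1
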